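/- Let d ∈ ℝⁿ with d_i > 0 for every i and let H = { x ∈ ℝⁿ : Σ_{i=1}^n d_i x_i = 0 }. Then θ̃ restricted to H is coercive (θ̃(x) → +∞ as ‖x‖ → ∞ with x ∈ H) if and only if there exists a feasible flow with the same pattern as A'. -/

import Mathlib

open BigOperators

/-- The partially minimized effective HOTS dual function `θ̃`. -/
noncomputable def tildeTheta {n : ℕ} (A : Matrix (Fin n) (Fin n) ℝ) (α : ℝ)
    (p : Fin n → ℝ) : ℝ :=
  (1 - 2 * (1 - α) * Real.log (1 - α) - (2 * α - 1) * Real.log (2 * α - 1))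
    + (1 - α) * Real.log (∑ i, Real.exp (-(p i)))
    + (1 - α) * Real.log (∑ i, Real.exp (p i))
    + (2 * α - 1) * Real.log (∑ i, ∑ j, A i j * Real.exp (p i - p j))

/-- The augmented `(n+1)×(n+1)` matrix `A'`: `A` in the upper-left block, `1` on the last
row and column (except the diagonal corner, which is `0`). -/
def augMatrix {n : ℕ} (A : Matrix (Fin n) (Fin n) ℝ) :
    Matrix (Fin (n + 1)) (Fin (n + 1)) ℝ :=
  fun i j =>
    if hi : (i : ℕ) < n then
      if hj : (j : ℕ) < n then A ⟨i, hi⟩ ⟨j, hj⟩ else 1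
    else
      if (j : ℕ) < n then 1 else 0

/-- A feasible flow with the same pattern as `A'`. -/
def FeasibleFlow {n : ℕ} (A : Matrix (Fin n) (Fin n) ℝ) (α : ℝ)
    (ρ : Matrix (Fin (n + 1)) (Fin (n + 1)) ℝ) : Prop :=
  (∀ i j, 0 < augMatrix A i j → 0 < ρ i j) ∧
  (∀ i j, augMatrix A i j = 0 → ρ i j = 0) ∧
  (∑ i, ∑ j, ρ i j = 1) ∧
  (∀ i, ∑ j, ρ i j = ∑ j, ρ j i) ∧
  (∑ j : Fin n, ρ (Fin.last n) j.castSucc = 1 - α) ∧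
  (∑ i : Fin n, ρ i.castSucc (Fin.last n) = 1 - α)

open Real Finset Filter Topology

/-! Both directions are weak and strong duality between `θ̃` and flows on `A'`. Give the extra node
the potential `0`. Each logarithm in `θ̃` dominates every weighted mean of its exponents, so a
feasible flow `ρ` bounds `θ̃` from below. The part of the bound that is linear in the potentials
vanishes by conservation, and moving the weight of a positive border entry `ρ (n+1) k` from `k` to
`l` improves the bound by `ρ (n+1) k * (p k - p l)`; hence `θ̃` grows at least linearly in the
oscillation of `p`. Conversely, a coercive `θ̃` attains its minimum, because it is invariant under
adding constants to `p`. The softmax weights of the three logarithms at `p` always form a matrix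
with the right pattern and marginals, and the gradient of `θ̃` is the net outflow of that matrix, so
at a minimizer it is a feasible flow. -/

section LogSumExp

variable {ι : Type*} [Fintype ι] {a w : ι → ℝ}

/-- The weighted log-sum-exp function `x ↦ log (∑ i, a i * exp (x i))`, the common shape of the
three logarithms in `θ̃`. -/
noncomputable def logSumExp (a x : ι → ℝ) : ℝ :=
  log (∑ i, a i * exp (x i))

/-- The Gibbs probability weights `a i * exp (x i) / ∑ j, a j * exp (x j)`, that is, the gradient
of `logSumExp a` at `x`. -/
noncomputable def softmax (a x : ι → ℝ) (i : ι) : ℝ :=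
  a i * exp (x i) / ∑ j, a j * exp (x j)

lemma sum_mul_exp_pos (ha : 0 < a) (x : ι → ℝ) : 0 < ∑ i, a i * exp (x i) := by
  obtain ⟨ha_nonneg, i, hi⟩ := Pi.lt_def.1 ha
  exact sum_pos' (fun j _ ↦ mul_nonneg (ha_nonneg j) (exp_pos _).le)
    ⟨i, mem_univ i, mul_pos hi (exp_pos _)⟩

lemma softmax_pos (ha : 0 < a) (x : ι → ℝ) {i : ι} (hi : 0 < a i) : 0 < softmax a x i :=
  div_pos (mul_pos hi (exp_pos _)) (sum_mul_exp_pos ha x)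

lemma softmax_eq_zero (x : ι → ℝ) {i : ι} (hi : a i = 0) : softmax a x i = 0 := by
  simp [softmax, hi]

lemma sum_softmax (ha : 0 < a) (x : ι → ℝ) : ∑ i, softmax a x i = 1 := by
  simp only [softmax]
  rw [← sum_div, div_self (sum_mul_exp_pos ha x).ne']

lemma logSumExp_add_const (ha : 0 < a) (x : ι → ℝ) (c : ℝ) :
    logSumExp a (fun i ↦ x i + c) = logSumExp a x + c := by
  simp only [logSumExp, exp_add, ← mul_assoc, ← sum_mul]
  rw [log_mul (sum_mul_exp_pos ha x).ne' (exp_pos c).ne', log_exp]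

lemma continuous_logSumExp (ha : 0 < a) : Continuous (logSumExp a) :=
  Continuous.log (by fun_prop) fun x ↦ (sum_mul_exp_pos ha x).ne'

lemma hasDerivAt_logSumExp (ha : 0 < a) {x : ℝ → ι → ℝ} {x' : ι → ℝ} {t : ℝ}
    (hx : ∀ i, HasDerivAt (fun s ↦ x s i) (x' i) t) :
    HasDerivAt (fun s ↦ logSumExp a (x s)) (∑ i, softmax a (x t) i * x' i) t := by
  have hsum : HasDerivAt (fun s ↦ ∑ i, a i * exp (x s i))
      (∑ i, a i * (exp (x t i) * x' i)) t :=
    HasDerivAt.fun_sum fun i _ ↦ (hx i).exp.const_mul (a i)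
  refine (hsum.log (sum_mul_exp_pos ha (x t)).ne').congr_deriv ?_
  rw [sum_div]
  exact sum_congr rfl fun i _ ↦ by rw [softmax]; ring

lemma add_log_le_logSumExp (ha : 0 ≤ a) (x : ι → ℝ) {i : ι} (hi : 0 < a i) :
    x i + log (a i) ≤ logSumExp a x := by
  have hterm : a i * exp (x i) ≤ ∑ j, a j * exp (x j) :=
    single_le_sum (f := fun j ↦ a j * exp (x j))
      (fun j _ ↦ mul_nonneg (ha j) (exp_pos _).le) (mem_univ i)
  calc x i + log (a i) = log (a i * exp (x i)) := by
        rw [log_mul hi.ne' (exp_pos _).ne', log_exp, add_comm]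
    _ ≤ logSumExp a x := log_le_log (mul_pos hi (exp_pos _)) hterm

lemma mul_logSumExp_sub_nonneg (ha : 0 ≤ a) (hw : 0 ≤ w) (hwa : ∀ i, a i = 0 → w i = 0)
    (x : ι → ℝ) (i : ι) : 0 ≤ w i * (logSumExp a x - (x i + log (a i))) := by
  rcases (ha i).eq_or_lt with hi | hi
  · rw [hwa i hi.symm, zero_mul]
  · exact mul_nonneg (hw i) (sub_nonneg.2 (add_log_le_logSumExp ha x hi))

lemma sum_mul_add_log_le_logSumExp (ha : 0 ≤ a) (hw : 0 ≤ w) (hwa : ∀ i, a i = 0 → w i = 0)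
    (x : ι → ℝ) : ∑ i, w i * (x i + log (a i)) ≤ (∑ i, w i) * logSumExp a x := by
  rw [sum_mul]
  exact sum_le_sum fun i _ ↦ by simpa [mul_sub] using mul_logSumExp_sub_nonneg ha hw hwa x i

lemma sum_mul_add_mul_sub_le_logSumExp (hw : 0 ≤ w) (x : ι → ℝ) (k l : ι) :
    ∑ i, w i * x i + w k * (x l - x k) ≤ (∑ i, w i) * logSumExp 1 x := by
  have hgap : w k * (logSumExp 1 x - x k) ≤ (∑ i, w i) * logSumExp 1 x - ∑ i, w i * x i := by
    simpa [sum_mul, mul_sub] using single_le_sum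
      (fun i _ ↦ mul_logSumExp_sub_nonneg (a := 1) zero_le_one hw (by simp) x i) (mem_univ k)
  have hl : x l ≤ logSumExp 1 x := by
    simpa using add_log_le_logSumExp (a := 1) zero_le_one x (i := l) (by simp)
  have hmove : w k * (x l - x k) ≤ w k * (logSumExp 1 x - x k) :=
    mul_le_mul_of_nonneg_left (sub_le_sub_right hl (x k)) (hw k)
  linarith

end LogSumExp

section NetOutflow

variable {V R : Type*} [Fintype V] [CommRing R]

/-- The divergence of the flow `ρ` at the node `i`: the flow out of `i` minus the flow into `i`. -/
def netOutflow (ρ : Matrix V V R) (i : V) : R :=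
  ∑ j, ρ i j - ∑ j, ρ j i

lemma sum_netOutflow (ρ : Matrix V V R) : ∑ i, netOutflow ρ i = 0 := by
  simp only [netOutflow, sum_sub_distrib]
  rw [sum_comm, sub_self]

lemma sum_mul_sub_eq_sum_netOutflow_mul (ρ : Matrix V V R) (P : V → R) :
    ∑ i, ∑ j, ρ i j * (P i - P j) = ∑ i, netOutflow ρ i * P i := by
  simp only [netOutflow, mul_sub, sub_mul, sum_sub_distrib, sum_mul]
  rw [sum_comm (f := fun i j ↦ ρ i j * P j)]

end NetOutflow

section Hyperplane

variable {ι : Type*} [Fintype ι] {d : ι → ℝ} {f : (ι → ℝ) → ℝ}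

lemma abs_sum_mul_norm_le [Nonempty ι] {x : ι → ℝ} {B : ℝ} (hx : ∑ i, d i * x i = 0)
    (hB : ∀ i j, x i - x j ≤ B) : |∑ i, d i| * ‖x‖ ≤ (∑ i, |d i|) * B := by
  have hcoord (i : ι) : |∑ j, d j| * |x i| ≤ (∑ j, |d j|) * B :=
    calc |∑ j, d j| * |x i| = |∑ j, d j * (x i - x j)| := by
          simp only [mul_sub, sum_sub_distrib, hx, sub_zero, ← sum_mul, abs_mul]
      _ ≤ ∑ j, |d j| * |x i - x j| := by
          simpa only [abs_mul] using abs_sum_le_sum_abs (fun j ↦ d j * (x i - x j)) univ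
      _ ≤ (∑ j, |d j|) * B := by
          rw [sum_mul]
          exact sum_le_sum fun j _ ↦ mul_le_mul_of_nonneg_left
            (abs_sub_le_iff.2 ⟨hB i j, hB j i⟩) (abs_nonneg _)
  obtain ⟨i, hi⟩ := Finite.exists_max fun i ↦ |x i|
  have hnorm : ‖x‖ ≤ |x i| := (pi_norm_le_iff_of_nonempty x).2 hi
  exact (mul_le_mul_of_nonneg_left hnorm (abs_nonneg _)).trans (hcoord i)

lemma tendsto_hyperplane_atTop_of_add_mul_sub_le (hd : ∑ i, d i ≠ 0) {K c : ℝ} (hc : 0 < c)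
    (hf : ∀ x i j, K + c * (x i - x j) ≤ f x) :
    Tendsto f (cocompact _ ⊓ 𝓟 {x | ∑ i, d i * x i = 0}) atTop := by
  obtain ⟨i₀, -, hi₀⟩ := exists_ne_zero_of_sum_ne_zero hd
  have : Nonempty ι := ⟨i₀⟩
  have hS : 0 < ∑ i, |d i| := sum_pos' (fun i _ ↦ abs_nonneg _) ⟨i₀, mem_univ _, abs_pos.2 hi₀⟩
  set ε : ℝ := c * (|∑ i, d i| / ∑ i, |d i|) with hε
  have hlinear : ∀ x : ι → ℝ, ∑ i, d i * x i = 0 → K + ε * ‖x‖ ≤ f x := fun x hx ↦ by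
    have hosc (i j : ι) : x i - x j ≤ (f x - K) / c := by
      rw [le_div_iff₀' hc]
      linarith [hf x i j]
    have hnorm : |∑ i, d i| / (∑ i, |d i|) * ‖x‖ ≤ (f x - K) / c := by
      rw [div_mul_eq_mul_div, div_le_iff₀' hS]
      exact abs_sum_mul_norm_le hx hosc
    rw [le_div_iff₀' hc, ← mul_assoc, ← hε] at hnorm
    linarith
  refine tendsto_atTop_mono' _ (eventually_inf_principal.2 (.of_forall hlinear)) ?_
  have hε_pos : 0 < ε := mul_pos hc (div_pos (abs_pos.2 hd) hS)
  exact (tendsto_atTop_add_const_left _ K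
    (tendsto_norm_cocompact_atTop.const_mul_atTop hε_pos)).mono_left inf_le_left

lemma exists_forall_le_of_tendsto_hyperplane (hd : ∑ i, d i ≠ 0) (hf : Continuous f)
    (hshift : ∀ x c, f (fun i ↦ x i + c) = f x)
    (hlim : Tendsto f (cocompact _ ⊓ 𝓟 {x | ∑ i, d i * x i = 0}) atTop) :
    ∃ p, ∀ q, f p ≤ f q := by
  have hclosed : IsClosed {x : ι → ℝ | ∑ i, d i * x i = 0} :=
    isClosed_eq (by fun_prop) continuous_const
  obtain ⟨p, -, hp⟩ := hf.continuousOn.exists_isMinOn' hclosed (x₀ := 0) (by simp)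
    (hlim.eventually_ge_atTop (f 0))
  refine ⟨p, fun q ↦ ?_⟩
  rw [← hshift q (-(∑ i, d i * q i) / ∑ i, d i)]
  refine hp ?_
  simp only [Set.mem_ofPred_eq, mul_add, sum_add_distrib, ← sum_mul]
  rw [mul_div_cancel₀ _ hd, add_neg_cancel]

end Hyperplane

lemma tendsto_cocompact_inf_principal_atTop_iff {E : Type*} [SeminormedAddCommGroup E]
    [ProperSpace E] {f : E → ℝ} {s : Set E} :
    Tendsto f (cocompact E ⊓ 𝓟 s) atTop ↔
      ∀ C, ∃ R, ∀ x, x ∈ s → R ≤ ‖x‖ → C ≤ f x := by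
  rw [← Metric.cobounded_eq_cocompact, ← comap_norm_atTop]
  rw [((atTop_basis.comap norm).inf_principal s).tendsto_iff atTop_basis]
  simp [imp.swap (a := _ ∈ s)]

section Bordered

variable {n : ℕ} {R : Type*}

/-- The `(n+1) × (n+1)` block matrix with upper-left block `B`, last column `c`, last row `r` and
corner `s`, indexed by `Fin (n + 1)` with `Fin.last n` as the extra node. -/
def bordered (B : Matrix (Fin n) (Fin n) R) (c r : Fin n → R) (s : R) :
    Matrix (Fin (n + 1)) (Fin (n + 1)) R :=
  Fin.snoc (α := fun _ ↦ Fin (n + 1) → R)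
    (fun i ↦ Fin.snoc (α := fun _ ↦ R) (B i) (c i)) (Fin.snoc (α := fun _ ↦ R) r s)

variable (B : Matrix (Fin n) (Fin n) R) (c r : Fin n → R) (s : R) (i j : Fin n)

@[simp]
lemma bordered_castSucc_castSucc : bordered B c r s i.castSucc j.castSucc = B i j := by
  simp [bordered]

@[simp]
lemma bordered_castSucc_last : bordered B c r s i.castSucc (Fin.last n) = c i := by
  simp [bordered]

@[simp]
lemma bordered_last_castSucc : bordered B c r s (Fin.last n) j.castSucc = r j := by
  simp [bordered]

@[simp]
lemma bordered_last_last : bordered B c r s (Fin.last n) (Fin.last n) = s := by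
  simp [bordered]

end Bordered

section TildeTheta

variable {n : ℕ} {A : Matrix (Fin n) (Fin n) ℝ} {α : ℝ}

lemma augMatrix_eq_bordered (A : Matrix (Fin n) (Fin n) ℝ) : augMatrix A = bordered A 1 1 0 := by
  ext i j
  induction i using Fin.lastCases <;> induction j using Fin.lastCases <;> simp [augMatrix]

/-- The additive constant `C(α)` of `θ̃`. -/
noncomputable def tildeThetaConst (α : ℝ) : ℝ :=
  1 - 2 * (1 - α) * log (1 - α) - (2 * α - 1) * log (2 * α - 1)

lemma tildeTheta_eq_logSumExp (A : Matrix (Fin n) (Fin n) ℝ) (α : ℝ) (p : Fin n → ℝ) :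
    tildeTheta A α p = tildeThetaConst α + (1 - α) * logSumExp 1 (-p) + (1 - α) * logSumExp 1 p +
      (2 * α - 1) * logSumExp (fun e : Fin n × Fin n ↦ A e.1 e.2) (fun e ↦ p e.1 - p e.2) := by
  simp [tildeTheta, tildeThetaConst, logSumExp, Fintype.sum_prod_type]

lemma entries_pos (hA : ∀ i j, 0 ≤ A i j) (hA0 : A ≠ 0) :
    0 < (fun e : Fin n × Fin n ↦ A e.1 e.2) :=
  lt_of_le_of_ne (fun e ↦ hA e.1 e.2) fun h ↦ hA0 <| Matrix.ext fun i j ↦ (congr_fun h (i, j)).symm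

lemma nonempty_of_ne_zero (hA0 : A ≠ 0) : Nonempty (Fin n) := by
  by_contra h
  rw [not_nonempty_iff] at h
  exact hA0 (Subsingleton.elim A 0)

lemma continuous_tildeTheta (hA : ∀ i j, 0 ≤ A i j) (hA0 : A ≠ 0) (α : ℝ) :
    Continuous (tildeTheta A α) := by
  have := nonempty_of_ne_zero hA0
  have hone := continuous_logSumExp (ι := Fin n) one_pos
  have hblock := continuous_logSumExp (entries_pos hA hA0)
  rw [funext (tildeTheta_eq_logSumExp A α)]
  fun_prop

lemma tildeTheta_add_const [Nonempty (Fin n)] (A : Matrix (Fin n) (Fin n) ℝ) (α : ℝ)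
    (p : Fin n → ℝ) (c : ℝ) : tildeTheta A α (fun i ↦ p i + c) = tildeTheta A α p := by
  have hneg : -(fun i ↦ p i + c) = fun i ↦ (-p) i + -c := by ext i; simp [add_comm]
  simp only [tildeTheta_eq_logSumExp, add_sub_add_right_eq_sub, hneg,
    logSumExp_add_const (ι := Fin n) one_pos]
  ring

namespace FeasibleFlow

variable {ρ : Matrix (Fin (n + 1)) (Fin (n + 1)) ℝ}

lemma nonneg (hρ : FeasibleFlow A α ρ) (hA : ∀ i j, 0 ≤ A i j)
    (i j : Fin (n + 1)) : 0 ≤ ρ i j := by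
  have hA' (i j) : 0 ≤ augMatrix A i j := by
    rw [augMatrix_eq_bordered]
    induction i using Fin.lastCases <;> induction j using Fin.lastCases <;> simp [hA]
  rcases (hA' i j).eq_or_lt with h | h
  · exact (hρ.2.1 i j h.symm).ge
  · exact (hρ.1 i j h).le

lemma last_castSucc_pos (hρ : FeasibleFlow A α ρ) (k : Fin n) : 0 < ρ (Fin.last n) k.castSucc :=
  hρ.1 _ _ (by simp [augMatrix_eq_bordered])

lemma last_last_eq_zero (hρ : FeasibleFlow A α ρ) : ρ (Fin.last n) (Fin.last n) = 0 :=
  hρ.2.1 _ _ (by simp [augMatrix_eq_bordered])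

lemma castSucc_castSucc_eq_zero (hρ : FeasibleFlow A α ρ) {i j : Fin n} (h : A i j = 0) :
    ρ i.castSucc j.castSucc = 0 :=
  hρ.2.1 _ _ (by simpa [augMatrix_eq_bordered] using h)

lemma sum_castSucc_castSucc (hρ : FeasibleFlow A α ρ) :
    ∑ i : Fin n, ∑ j : Fin n, ρ i.castSucc j.castSucc = 2 * α - 1 := by
  have ⟨_, _, htotal, _, hrow, hcol⟩ := hρ
  simp only [Fin.sum_univ_castSucc, sum_add_distrib, hρ.last_last_eq_zero] at htotal
  linarith

lemma sum_mul_sub_eq_zero (hρ : FeasibleFlow A α ρ) (P : Fin (n + 1) → ℝ) :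
    ∑ i, ∑ j, ρ i j * (P i - P j) = 0 := by
  have ⟨_, _, _, hbalance, _⟩ := hρ
  simp [sum_mul_sub_eq_sum_netOutflow_mul, netOutflow, hbalance]

lemma add_mul_sub_le_tildeTheta (hρ : FeasibleFlow A α ρ) (hA : ∀ i j, 0 ≤ A i j)
    (p : Fin n → ℝ) (k l : Fin n) :
    tildeThetaConst α + ∑ i : Fin n, ∑ j : Fin n, ρ i.castSucc j.castSucc * log (A i j) +
      ρ (Fin.last n) k.castSucc * (p k - p l) ≤ tildeTheta A α p := by
  have hρ_nonneg := hρ.nonneg hA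
  have ⟨_, _, _, _, hrow, hcol⟩ := hρ
  have hrow_le := sum_mul_add_mul_sub_le_logSumExp (w := fun j : Fin n ↦ ρ (Fin.last n) j.castSucc)
    (fun j ↦ hρ_nonneg _ _) (-p) k l
  have hcol_le := sum_mul_add_log_le_logSumExp (a := 1)
    (w := fun i : Fin n ↦ ρ i.castSucc (Fin.last n)) zero_le_one (fun i ↦ hρ_nonneg _ _) (by simp) p
  have hblock_le := sum_mul_add_log_le_logSumExp (a := fun e : Fin n × Fin n ↦ A e.1 e.2)
    (w := fun e : Fin n × Fin n ↦ ρ e.1.castSucc e.2.castSucc) (fun e ↦ hA e.1 e.2)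
    (fun e ↦ hρ_nonneg _ _) (fun e ↦ hρ.castSucc_castSucc_eq_zero) (fun e ↦ p e.1 - p e.2)
  have hcirculation := hρ.sum_mul_sub_eq_zero (Fin.snoc (α := fun _ ↦ ℝ) p 0)
  simp only [hrow, Pi.neg_apply] at hrow_le
  simp only [hcol, Pi.one_apply, log_one, add_zero] at hcol_le
  simp only [Fintype.sum_prod_type, hρ.sum_castSucc_castSucc, mul_add,
    sum_add_distrib] at hblock_le
  simp only [Fin.sum_univ_castSucc, Fin.snoc_castSucc, Fin.snoc_last, sum_add_distrib, sub_zero,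
    zero_sub, mul_zero, add_zero] at hcirculation
  rw [tildeTheta_eq_logSumExp]
  linarith

lemma exists_add_mul_sub_le_tildeTheta (hρ : FeasibleFlow A α ρ) (hA : ∀ i j, 0 ≤ A i j)
    [Nonempty (Fin n)] :
    ∃ K c : ℝ, 0 < c ∧ ∀ p k l, K + c * (p k - p l) ≤ tildeTheta A α p := by
  obtain ⟨m, hm⟩ := Finite.exists_min fun k : Fin n ↦ ρ (Fin.last n) k.castSucc
  refine ⟨tildeThetaConst α + ∑ i : Fin n, ∑ j : Fin n, ρ i.castSucc j.castSucc * log (A i j),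
    ρ (Fin.last n) m.castSucc, hρ.last_castSucc_pos m, fun p k l ↦ ?_⟩
  rcases le_total (p l) (p k) with h | h
  · exact (add_le_add_right (mul_le_mul_of_nonneg_right (hm k) (sub_nonneg.2 h)) _).trans
      (hρ.add_mul_sub_le_tildeTheta hA p k l)
  · exact (add_le_add_right (mul_nonpos_of_nonneg_of_nonpos (hρ.last_castSucc_pos m).le
      (sub_nonpos.2 h)) _).trans (by simpa using hρ.add_mul_sub_le_tildeTheta hA p k k)

end FeasibleFlow

/-- The candidate flow on `A'` at the potential `p`: the softmax weights of the three logarithms in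
`θ̃`, scaled to total mass `2 * α - 1` on the block `A` and `1 - α` on the last column and row. -/
noncomputable def gibbsFlow (A : Matrix (Fin n) (Fin n) ℝ) (α : ℝ) (p : Fin n → ℝ) :
    Matrix (Fin (n + 1)) (Fin (n + 1)) ℝ :=
  bordered
    (.of fun i j ↦ (2 * α - 1) * softmax (fun e ↦ A e.1 e.2) (fun e ↦ p e.1 - p e.2) (i, j))
    (fun i ↦ (1 - α) * softmax 1 p i) (fun j ↦ (1 - α) * softmax 1 (-p) j) 0

lemma sum_gibbsFlow_last_castSucc [Nonempty (Fin n)] (A : Matrix (Fin n) (Fin n) ℝ) (α : ℝ)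
    (p : Fin n → ℝ) : ∑ j : Fin n, gibbsFlow A α p (Fin.last n) j.castSucc = 1 - α := by
  simp [gibbsFlow, ← mul_sum, sum_softmax]

lemma sum_gibbsFlow_castSucc_last [Nonempty (Fin n)] (A : Matrix (Fin n) (Fin n) ℝ) (α : ℝ)
    (p : Fin n → ℝ) : ∑ i : Fin n, gibbsFlow A α p i.castSucc (Fin.last n) = 1 - α := by
  simp [gibbsFlow, ← mul_sum, sum_softmax]

lemma sum_gibbsFlow (hA : ∀ i j, 0 ≤ A i j) (hA0 : A ≠ 0) (α : ℝ) (p : Fin n → ℝ) :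
    ∑ i, ∑ j, gibbsFlow A α p i j = 1 := by
  have := nonempty_of_ne_zero hA0
  have hblock : ∑ i, ∑ j, softmax (fun e ↦ A e.1 e.2) (fun e ↦ p e.1 - p e.2) (i, j) = 1 := by
    rw [← Fintype.sum_prod_type', sum_softmax (entries_pos hA hA0)]
  simp only [Fin.sum_univ_castSucc, sum_add_distrib, sum_gibbsFlow_last_castSucc,
    sum_gibbsFlow_castSucc_last]
  simp only [gibbsFlow, bordered_castSucc_castSucc, bordered_last_last, Matrix.of_apply,
    ← mul_sum, hblock]
  ring

lemma gibbsFlow_pos (hA : ∀ i j, 0 ≤ A i j) (hα₁ : 1 / 2 < α) (hα₂ : α < 1) (p : Fin n → ℝ)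
    {i j : Fin (n + 1)} (hij : 0 < augMatrix A i j) : 0 < gibbsFlow A α p i j := by
  have hα : 0 < 2 * α - 1 := by linarith
  rw [augMatrix_eq_bordered] at hij
  induction i using Fin.lastCases with
  | last =>
    induction j using Fin.lastCases with
    | last => simp at hij
    | cast j =>
      have : Nonempty (Fin n) := ⟨j⟩
      simpa [gibbsFlow, hα₂] using softmax_pos one_pos _ (by simp)
  | cast i =>
    have : Nonempty (Fin n) := ⟨i⟩
    induction j using Fin.lastCases with
    | last => simpa [gibbsFlow, hα₂] using softmax_pos one_pos _ (by simp)
    | cast j =>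
      have hAij : 0 < A i j := by simpa using hij
      simpa [gibbsFlow, hα] using softmax_pos (entries_pos hA (by rintro rfl; simp at hAij)) _ hAij

lemma gibbsFlow_eq_zero (α : ℝ) (p : Fin n → ℝ) {i j : Fin (n + 1)} (hij : augMatrix A i j = 0) :
    gibbsFlow A α p i j = 0 := by
  rw [augMatrix_eq_bordered] at hij
  induction i using Fin.lastCases <;> induction j using Fin.lastCases <;>
    simp_all [gibbsFlow, softmax_eq_zero]

lemma hasDerivAt_tildeTheta_add_smul (hA : ∀ i j, 0 ≤ A i j) (hA0 : A ≠ 0) (α : ℝ)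
    (p q : Fin n → ℝ) :
    HasDerivAt (fun t : ℝ ↦ tildeTheta A α (p + t • q))
      (∑ i, netOutflow (gibbsFlow A α p) i * (Fin.snoc q 0 : Fin (n + 1) → ℝ) i) 0 := by
  have := nonempty_of_ne_zero hA0
  have hline (i : Fin n) : HasDerivAt (fun t : ℝ ↦ (p + t • q) i) (q i) 0 := by
    simpa using ((hasDerivAt_id (0 : ℝ)).mul_const (q i)).const_add (p i)
  have hrow : HasDerivAt (fun t : ℝ ↦ logSumExp 1 (-(p + t • q)))
      (∑ i, softmax 1 (-p) i * -q i) 0 := by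
    simpa using hasDerivAt_logSumExp (x := fun t ↦ -(p + t • q)) one_pos fun i ↦ (hline i).neg
  have hcol : HasDerivAt (fun t : ℝ ↦ logSumExp 1 (p + t • q)) (∑ i, softmax 1 p i * q i) 0 := by
    simpa using hasDerivAt_logSumExp one_pos hline
  have hblock : HasDerivAt
      (fun t : ℝ ↦ logSumExp (fun e : Fin n × Fin n ↦ A e.1 e.2)
        fun e ↦ (p + t • q) e.1 - (p + t • q) e.2)
      (∑ e : Fin n × Fin n,
        softmax (fun e ↦ A e.1 e.2) (fun e ↦ p e.1 - p e.2) e * (q e.1 - q e.2)) 0 := by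
    simpa using hasDerivAt_logSumExp
      (x := fun (t : ℝ) (e : Fin n × Fin n) ↦ (p + t • q) e.1 - (p + t • q) e.2)
      (entries_pos hA hA0) fun e ↦ (hline e.1).sub (hline e.2)
  simp only [tildeTheta_eq_logSumExp]
  refine ((((hrow.const_mul (1 - α)).const_add (tildeThetaConst α)).add
    (hcol.const_mul (1 - α))).add (hblock.const_mul (2 * α - 1))).congr_deriv ?_
  rw [← sum_mul_sub_eq_sum_netOutflow_mul]
  simp only [gibbsFlow, Fin.sum_univ_castSucc, bordered_castSucc_castSucc, bordered_castSucc_last,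
    bordered_last_castSucc, bordered_last_last, Matrix.of_apply, Fin.snoc_castSucc, Fin.snoc_last,
    Fintype.sum_prod_type, mul_sum, sum_add_distrib, mul_assoc, sub_zero, zero_sub, mul_zero]
  ring

lemma netOutflow_gibbsFlow_eq_zero (hA : ∀ i j, 0 ≤ A i j) (hA0 : A ≠ 0)
    {p : Fin n → ℝ} (hp : IsLocalMin (tildeTheta A α) p) : netOutflow (gibbsFlow A α p) = 0 := by
  have hcastSucc (k : Fin n) : netOutflow (gibbsFlow A α p) k.castSucc = 0 := by
    have hmin : IsLocalMin (tildeTheta A α ∘ fun t : ℝ ↦ p + t • Pi.single k 1) 0 :=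
      IsLocalMin.comp_continuous (by simpa using hp) (by fun_prop)
    simpa [Fin.sum_univ_castSucc, Pi.single_apply] using
      hmin.hasDerivAt_eq_zero (hasDerivAt_tildeTheta_add_smul hA hA0 α p (Pi.single k 1))
  have hlast := sum_netOutflow (gibbsFlow A α p)
  simp only [Fin.sum_univ_castSucc, hcastSucc, sum_const_zero, zero_add] at hlast
  exact funext (Fin.forall_fin_succ'.2 ⟨hcastSucc, hlast⟩)

lemma feasibleFlow_gibbsFlow (hA : ∀ i j, 0 ≤ A i j) (hA0 : A ≠ 0) (hα₁ : 1 / 2 < α) (hα₂ : α < 1)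
    {p : Fin n → ℝ} (hp : IsLocalMin (tildeTheta A α) p) : FeasibleFlow A α (gibbsFlow A α p) := by
  have := nonempty_of_ne_zero hA0
  exact ⟨fun _ _ ↦ gibbsFlow_pos hA hα₁ hα₂ p, fun _ _ ↦ gibbsFlow_eq_zero α p,
    sum_gibbsFlow hA hA0 α p,
    fun i ↦ sub_eq_zero.1 (congr_fun (netOutflow_gibbsFlow_eq_zero hA hA0 hp) i),
    sum_gibbsFlow_last_castSucc A α p, sum_gibbsFlow_castSucc_last A α p⟩

end TildeTheta

theorem tildeTheta_coercive_iff_feasibleFlow_general {n : ℕ} (A : Matrix (Fin n) (Fin n) ℝ)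
    (hA : ∀ i j, 0 ≤ A i j) (hA0 : A ≠ 0) (α : ℝ) (hα₁ : 1 / 2 < α) (hα₂ : α < 1)
    (d : Fin n → ℝ) (hd : ∑ i, d i ≠ 0) :
    (∀ C : ℝ, ∃ R : ℝ, ∀ x : Fin n → ℝ, (∑ i, d i * x i = 0) → R ≤ ‖x‖ →
      C ≤ tildeTheta A α x) ↔
    ∃ ρ : Matrix (Fin (n + 1)) (Fin (n + 1)) ℝ, FeasibleFlow A α ρ := by
  have := nonempty_of_ne_zero hA0
  refine (tendsto_cocompact_inf_principal_atTop_iff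
    (s := {x : Fin n → ℝ | ∑ i, d i * x i = 0})).symm.trans ⟨fun hcoercive ↦ ?_, ?_⟩
  · obtain ⟨p, hp⟩ := exists_forall_le_of_tendsto_hyperplane hd (continuous_tildeTheta hA hA0 α)
      (tildeTheta_add_const A α) hcoercive
    exact ⟨gibbsFlow A α p, feasibleFlow_gibbsFlow hA hA0 hα₁ hα₂ (.of_forall hp)⟩
  · rintro ⟨ρ, hρ⟩
    obtain ⟨K, c, hc, hbound⟩ := hρ.exists_add_mul_sub_le_tildeTheta hA
    exact tendsto_hyperplane_atTop_of_add_mul_sub_le hd hc hbound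

/-- `θ̃` is coercive on the hyperplane `{x : Σ d_i x_i = 0}` if and only if there exists
a feasible flow with the same pattern as `A'`. -/
theorem tildeTheta_coercive_iff_feasibleFlow {n : ℕ} (A : Matrix (Fin n) (Fin n) ℝ)
    (hA : ∀ i j, 0 ≤ A i j) (hA0 : A ≠ 0) (α : ℝ) (hα₁ : 1 / 2 < α) (hα₂ : α < 1)
    (d : Fin n → ℝ) (hd : ∀ i, 0 < d i) :
    (∀ C : ℝ, ∃ R : ℝ, ∀ x : Fin n → ℝ, (∑ i, d i * x i = 0) → R ≤ ‖x‖ →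
      C ≤ tildeTheta A α x) ↔
    ∃ ρ : Matrix (Fin (n + 1)) (Fin (n + 1)) ℝ, FeasibleFlow A α ρ :=
  tildeTheta_coercive_iff_feasibleFlow_general A hA hA0 α hα₁ hα₂ d
    (sum_pos (fun i _ ↦ hd i) (univ_nonempty_iff.2 (nonempty_of_ne_zero hA0))).ne'
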